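/- arXiv:1311.0576 — 3 statements merged into one kernel-verified Lean document; each statement's English description precedes it below -/
import Mathlib

section
/- Let Z be a standard Gaussian random variable (law N(0,1)) and let α ≥ 0. Then the function g(μ) = E[(η(μ + Z; α) − μ)²] satisfies lim_{μ → ∞} g(μ) = 1 + α². -/
open MeasureTheory ProbabilityTheory

/-- Soft thresholding operator `η(x; θ)`. -/
noncomputable def softThresh (x θ : ℝ) : ℝ :=
  if x > θ then x - θ else if x < -θ then x + θ else 0

/-!
For fixed `z`, as soon as `μ > θ - z` the operator acts on `μ + z` as the shift by `-θ`, so the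
error `η(μ + z; θ) - μ` equals `z - θ`. Soft thresholding moves each point by at most `|θ|`, so the
error is at most `|z| + |θ|`, uniformly in `μ`. By dominated convergence the mean squared error for
a square-integrable noise `X` tends to `E[(X - θ)²] = Var X + (E X - θ)²`.
-/

open Filter
open scoped Topology

lemma softThresh_of_lt {x θ : ℝ} (h : θ < x) : softThresh x θ = x - θ :=
  if_pos h

lemma abs_softThresh_sub_self_le (x θ : ℝ) : |softThresh x θ - x| ≤ |θ| := by
  unfold softThresh
  split_ifs with h_gt h_lt
  · simp
  · simp
  · rw [zero_sub, abs_neg]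
    exact abs_le_abs (not_lt.mp h_gt) (neg_le.mp (not_lt.mp h_lt))

lemma abs_softThresh_add_sub_le (μ z θ : ℝ) : |softThresh (μ + z) θ - μ| ≤ |z| + |θ| :=
  calc |softThresh (μ + z) θ - μ|
      = |z + (softThresh (μ + z) θ - (μ + z))| := by ring_nf
    _ ≤ |z| + |softThresh (μ + z) θ - (μ + z)| := abs_add_le _ _
    _ ≤ |z| + |θ| := add_le_add le_rfl (abs_softThresh_sub_self_le _ _)

lemma tendsto_softThresh_add_sub_atTop (z θ : ℝ) :
    Tendsto (fun μ => softThresh (μ + z) θ - μ) atTop (𝓝 (z - θ)) := by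
  refine tendsto_const_nhds.congr' ?_
  filter_upwards [eventually_gt_atTop (θ - z)] with μ hμ
  rw [softThresh_of_lt (sub_lt_iff_lt_add.mp hμ)]
  ring

lemma measurable_softThresh : Measurable (fun p : ℝ × ℝ => softThresh p.1 p.2) :=
  Measurable.ite (measurableSet_lt (by fun_prop) (by fun_prop)) (by fun_prop)
    (Measurable.ite (measurableSet_lt (by fun_prop) (by fun_prop)) (by fun_prop) (by fun_prop))

section SquareIntegrable

variable {Ω : Type*} [MeasurableSpace Ω] {P : Measure Ω} {X : Ω → ℝ}

lemma integral_sub_const_sq [IsProbabilityMeasure P] (hX : MemLp X 2 P) (c : ℝ) :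
    ∫ ω, (X ω - c) ^ 2 ∂P = Var[X; P] + (P[X] - c) ^ 2 := by
  have h_mean : ∫ ω, (X ω - c) ∂P = P[X] - c := by
    simp [integral_sub (hX.integrable one_le_two) (integrable_const c)]
  have h_var := variance_eq_sub (hX.sub (memLp_const c))
  have h_shift : Var[X - fun _ => c; P] = Var[X; P] := variance_sub_const hX.aestronglyMeasurable c
  simp only [h_shift, Pi.pow_apply, Pi.sub_apply, h_mean] at h_var
  linarith

lemma tendsto_integral_softThresh_add_sub_sq_atTop [IsFiniteMeasure P] (hX : MemLp X 2 P) (θ : ℝ) :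
    Tendsto (fun μ => ∫ ω, (softThresh (μ + X ω) θ - μ) ^ 2 ∂P) atTop
      (𝓝 (∫ ω, (X ω - θ) ^ 2 ∂P)) := by
  have h_meas (μ : ℝ) : AEStronglyMeasurable (fun ω => (softThresh (μ + X ω) θ - μ) ^ 2) P := by
    have h_input : AEMeasurable (fun ω => (μ + X ω, θ)) P :=
      (hX.aemeasurable.const_add μ).prodMk aemeasurable_const
    exact (((measurable_softThresh.comp_aemeasurable h_input).sub_const μ).pow_const
      2).aestronglyMeasurable
  have h_bound (μ : ℝ) (ω : Ω) :
      ‖(softThresh (μ + X ω) θ - μ) ^ 2‖ ≤ (|X ω| + |θ|) ^ 2 := by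
    rw [norm_pow, Real.norm_eq_abs]
    gcongr
    exact abs_softThresh_add_sub_le _ _ _
  have h_integrable : Integrable (fun ω => (|X ω| + |θ|) ^ 2) P :=
    (hX.abs.add (memLp_const |θ|)).integrable_sq
  exact tendsto_integral_filter_of_dominated_convergence _ (.of_forall h_meas)
    (.of_forall fun μ => .of_forall (h_bound μ)) h_integrable
    (.of_forall fun ω => (tendsto_softThresh_add_sub_atTop (X ω) θ).pow 2)

theorem soft_thresholding_mse_tendsto_atTop_general [IsProbabilityMeasure P] (hX : MemLp X 2 P)
    (θ : ℝ) :
    Tendsto (fun μ => ∫ ω, (softThresh (μ + X ω) θ - μ) ^ 2 ∂P) atTop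
      (𝓝 (Var[X; P] + (P[X] - θ) ^ 2)) :=
  integral_sub_const_sq hX θ ▸ tendsto_integral_softThresh_add_sub_sq_atTop hX θ

end SquareIntegrable

/-- For `Z ~ N(0,1)` and `α ≥ 0`, the soft-thresholding MSE
`g(μ) = E[(η(μ + Z; α) − μ)²]` tends to `1 + α²` as `μ → ∞`. -/
theorem soft_thresholding_mse_tendsto_atTop (α : ℝ) (hα : 0 ≤ α) :
    Filter.Tendsto
      (fun μ : ℝ => ∫ z, (softThresh (μ + z) α - μ)^2 ∂(gaussianReal 0 1))
      Filter.atTop (nhds (1 + α^2)) := by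
  simpa using soft_thresholding_mse_tendsto_atTop_general
    (memLp_id_gaussianReal (μ := 0) (v := 1) 2) α
end

section
/- Define h(α) = (1 + α²)·Φ(−α) − α·φ(α) for α ≥ 0, where φ(z) = exp(−z²/2)/√(2π) and Φ(z) = ∫_{−∞}^z φ(t) dt. Then h is continuous and strictly decreasing on [0, ∞), h(0) = 1/2, and h(α) → 0 as α → ∞. Consequently, for every real c with 0 < c ≤ 1/2 there exists a unique α ≥ 0 with h(α) = c; in particular, for δ > 0 and γ_s > 0 with (δ/2)·(γ_s² + 1)²/γ_s⁴ ≤ 1/2, the equation (1 + α²)Φ(−α) − αφ(α) = (δ/2)·(γ_s² + 1)²/γ_s⁴ has a unique nonnegative solution α_min(δ, γ_s). -/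
/-- The standard normal density `φ`. -/
noncomputable def stdGaussianPdf (z : ℝ) : ℝ :=
  Real.exp (-z^2 / 2) / Real.sqrt (2 * Real.pi)

/-- The standard normal cumulative distribution function `Φ`. -/
noncomputable def stdGaussianCdf (z : ℝ) : ℝ :=
  ∫ t in Set.Iic z, stdGaussianPdf t

/-!
Let `g α = φ α - α Φ(-α)`, which equals `∫ (-t - α) φ(t)` over `t ≤ -α` because `-t φ(t)` is the
derivative of `φ`; in particular `g > 0`. Since `h' = -2 g`, the function `h` is strictly
decreasing on the whole line. Its definition and `h α = Φ(-α) - α g α` give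
`-α φ α ≤ h α ≤ Φ(-α)` for `α ≥ 0`, so `h` vanishes at infinity. The value `h 0 = Φ 0 = 1/2` is the
symmetry of the Gaussian, and the solutions of `h α = c` come from the intermediate value theorem.
-/

open Set Filter Topology MeasureTheory ProbabilityTheory

lemma existsUnique_ge_eq_of_injOn_of_tendsto_atTop {X Y : Type*}
    [ConditionallyCompleteLinearOrder X] [TopologicalSpace X] [OrderTopology X] [DenselyOrdered X]
    [LinearOrder Y] [TopologicalSpace Y] [OrderClosedTopology Y] {f : X → Y} {a : X} {l c : Y}
    (hcont : ContinuousOn f (Ici a)) (hinj : InjOn f (Ici a)) (hlim : Tendsto f atTop (𝓝 l))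
    (hc : c ∈ Ioc l (f a)) : ∃! x, a ≤ x ∧ f x = c := by
  have : Nonempty X := ⟨a⟩
  obtain ⟨x, hx, hfx⟩ := isPreconnected_Ici.intermediate_value_Ioc self_mem_Ici
    (le_principal_iff.2 (Ici_mem_atTop a)) hcont hlim hc
  exact ⟨x, ⟨hx, hfx⟩, fun y ⟨hy, hfy⟩ ↦ hinj hy hx (hfy.trans hfx.symm)⟩

section Integral

variable {E : Type*} [NormedAddCommGroup E] [NormedSpace ℝ E] {f : ℝ → E}

lemma hasDerivAt_integral_Iic [CompleteSpace E] {z : ℝ} (hf : Integrable f)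
    (hz : ContinuousAt f z) : HasDerivAt (fun x ↦ ∫ t in Iic x, f t) (f z) z := by
  have hsplit : (fun x ↦ ∫ t in Iic x, f t) =
      fun x ↦ (∫ t in Iic z, f t) + ∫ t in z..x, f t := funext fun x ↦ by
    rw [← intervalIntegral.integral_Iic_sub_Iic hf.integrableOn hf.integrableOn, add_sub_cancel]
  rw [hsplit]
  exact (intervalIntegral.integral_hasDerivAt_right hf.intervalIntegrable
    hf.aestronglyMeasurable.stronglyMeasurableAtFilter hz).const_add _

lemma two_nsmul_integral_Iic_zero_of_even (hf : Integrable f) (heven : Function.Even f) :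
    2 • ∫ t in Iic 0, f t = ∫ t, f t := by
  have hflip : ∫ t in Ioi 0, f t = ∫ t in Iic 0, f t := by
    simpa only [heven _, neg_zero] using (integral_comp_neg_Iic (0 : ℝ) f).symm
  rw [two_nsmul, ← intervalIntegral.integral_Iic_add_Ioi hf.integrableOn hf.integrableOn, hflip]

end Integral

lemma stdGaussianPdf_eq_gaussianPDFReal : stdGaussianPdf = gaussianPDFReal 0 1 := by
  funext z
  simp [stdGaussianPdf, gaussianPDFReal, div_eq_inv_mul]

lemma stdGaussianPdf_pos (z : ℝ) : 0 < stdGaussianPdf z := by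
  unfold stdGaussianPdf
  positivity

lemma stdGaussianPdf_even : Function.Even stdGaussianPdf := fun z ↦ by
  simp only [stdGaussianPdf, neg_sq]

lemma integrable_stdGaussianPdf : Integrable stdGaussianPdf :=
  stdGaussianPdf_eq_gaussianPDFReal ▸ integrable_gaussianPDFReal 0 1

lemma integral_stdGaussianPdf : ∫ t, stdGaussianPdf t = 1 :=
  stdGaussianPdf_eq_gaussianPDFReal ▸ integral_gaussianPDFReal_eq_one 0 one_ne_zero

lemma hasDerivAt_stdGaussianPdf (z : ℝ) : HasDerivAt stdGaussianPdf (-z * stdGaussianPdf z) z := by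
  have hexponent : HasDerivAt (fun x : ℝ ↦ -x ^ 2 / 2) (-z) z :=
    ((hasDerivAt_pow 2 z).neg.div_const 2).congr_deriv (by norm_num; ring)
  refine (hexponent.exp.div_const (Real.sqrt (2 * Real.pi))).congr_deriv ?_
  rw [stdGaussianPdf]
  ring

lemma integrable_neg_mul_stdGaussianPdf : Integrable fun t ↦ -t * stdGaussianPdf t := by
  refine ((integrable_mul_exp_neg_mul_sq (b := 1 / 2) (by norm_num)).div_const
    (-Real.sqrt (2 * Real.pi))).congr (ae_of_all _ fun t ↦ ?_)
  simp only [stdGaussianPdf]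
  ring_nf

lemma integral_Iic_neg_mul_stdGaussianPdf (z : ℝ) :
    ∫ t in Iic z, -t * stdGaussianPdf t = stdGaussianPdf z := by
  have hderiv (t : ℝ) (_ : t ∈ Iic z) := hasDerivAt_stdGaussianPdf t
  have hint := integrable_neg_mul_stdGaussianPdf.integrableOn (s := Iic z)
  have hlim : Tendsto stdGaussianPdf atBot (𝓝 0) :=
    tendsto_zero_of_hasDerivAt_of_integrableOn_Iic hderiv hint
      integrable_stdGaussianPdf.integrableOn
  rw [integral_Iic_of_hasDerivAt_of_tendsto' hderiv hint hlim, sub_zero]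

lemma tendsto_mul_stdGaussianPdf_atTop :
    Tendsto (fun z ↦ z * stdGaussianPdf z) atTop (𝓝 0) := by
  have hexp : Tendsto (fun z : ℝ ↦ |z| ^ (1 : ℝ) * Real.exp (-(1 / 2) * z ^ 2)) atTop (𝓝 0) :=
    (tendsto_rpow_abs_mul_exp_neg_mul_sq_cocompact (by norm_num) 1).mono_left atTop_le_cocompact
  have hdiv := hexp.div_const (Real.sqrt (2 * Real.pi))
  rw [zero_div] at hdiv
  refine hdiv.congr' ?_
  filter_upwards [eventually_ge_atTop 0] with z hz
  rw [Real.rpow_one, abs_of_nonneg hz, stdGaussianPdf]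
  ring_nf

lemma stdGaussianCdf_nonneg (z : ℝ) : 0 ≤ stdGaussianCdf z :=
  setIntegral_nonneg measurableSet_Iic fun t _ ↦ (stdGaussianPdf_pos t).le

lemma stdGaussianCdf_zero : stdGaussianCdf 0 = 1 / 2 := by
  have htwice : 2 • stdGaussianCdf 0 = 1 :=
    (two_nsmul_integral_Iic_zero_of_even integrable_stdGaussianPdf stdGaussianPdf_even).trans
      integral_stdGaussianPdf
  rw [nsmul_eq_mul, Nat.cast_ofNat] at htwice
  linarith

lemma tendsto_stdGaussianCdf_atBot : Tendsto stdGaussianCdf atBot (𝓝 0) :=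
  tendsto_integral_Iic_zero tendsto_id

lemma hasDerivAt_stdGaussianCdf (z : ℝ) : HasDerivAt stdGaussianCdf (stdGaussianPdf z) z :=
  hasDerivAt_integral_Iic integrable_stdGaussianPdf (hasDerivAt_stdGaussianPdf z).continuousAt

lemma hasDerivAt_stdGaussianCdf_neg (α : ℝ) :
    HasDerivAt (fun x ↦ stdGaussianCdf (-x)) (-stdGaussianPdf α) α := by
  have hcomp := (hasDerivAt_stdGaussianCdf (-α)).comp α (hasDerivAt_neg α)
  rwa [stdGaussianPdf_even, mul_neg_one] at hcomp

/-- The mean excess `𝔼[(Z - α)⁺]` of a standard normal `Z` over the level `α`, in closed form. -/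
noncomputable def stdGaussianExcess (α : ℝ) : ℝ :=
  stdGaussianPdf α - α * stdGaussianCdf (-α)

/-- The mean squared excess `𝔼[((Z - α)⁺)²]` of a standard normal `Z` over the level `α`, in closed
form: the function `h` of the theorem. It is half the mean square of the soft-thresholding of `Z`
at level `α`. -/
noncomputable def stdGaussianSqExcess (α : ℝ) : ℝ :=
  (1 + α ^ 2) * stdGaussianCdf (-α) - α * stdGaussianPdf α

lemma stdGaussianExcess_eq_integral (α : ℝ) :
    stdGaussianExcess α = ∫ t in Iic (-α), (-t - α) * stdGaussianPdf t := by
  simp only [sub_mul]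
  rw [integral_sub integrable_neg_mul_stdGaussianPdf.integrableOn
    (integrable_stdGaussianPdf.const_mul α).integrableOn, integral_const_mul,
    integral_Iic_neg_mul_stdGaussianPdf, stdGaussianPdf_even, stdGaussianExcess, stdGaussianCdf]

lemma stdGaussianExcess_pos (α : ℝ) : 0 < stdGaussianExcess α := by
  have hint : Integrable fun t ↦ (-t - α) * stdGaussianPdf t := by
    simpa only [sub_mul] using!
      integrable_neg_mul_stdGaussianPdf.sub (integrable_stdGaussianPdf.const_mul α)
  have hpos : ∀ t ∈ Iio (-α), 0 < (-t - α) * stdGaussianPdf t := fun t ht ↦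
    mul_pos (by linarith [mem_Iio.1 ht]) (stdGaussianPdf_pos t)
  have hsupport : Iio (-α) ⊆ Function.support fun t ↦ (-t - α) * stdGaussianPdf t := fun t ht ↦
    (hpos t ht).ne'
  rw [stdGaussianExcess_eq_integral, integral_Iic_eq_integral_Iio,
    setIntegral_pos_iff_support_of_nonneg_ae
      (ae_restrict_of_forall_mem measurableSet_Iio fun t ht ↦ (hpos t ht).le) hint.integrableOn,
    inter_eq_right.2 hsupport, Real.volume_Iio]
  exact ENNReal.zero_lt_top

lemma stdGaussianSqExcess_zero : stdGaussianSqExcess 0 = 1 / 2 := by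
  simp [stdGaussianSqExcess, stdGaussianCdf_zero]

lemma stdGaussianSqExcess_eq_cdf_sub (α : ℝ) :
    stdGaussianSqExcess α = stdGaussianCdf (-α) - α * stdGaussianExcess α := by
  rw [stdGaussianSqExcess, stdGaussianExcess]
  ring

lemma hasDerivAt_stdGaussianSqExcess (α : ℝ) :
    HasDerivAt stdGaussianSqExcess (-2 * stdGaussianExcess α) α := by
  have hquad : HasDerivAt (fun x : ℝ ↦ 1 + x ^ 2) (2 * α) α := by
    simpa using (hasDerivAt_pow 2 α).const_add 1
  refine ((hquad.mul (hasDerivAt_stdGaussianCdf_neg α)).sub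
    ((hasDerivAt_id α).mul (hasDerivAt_stdGaussianPdf α))).congr_deriv ?_
  rw [stdGaussianExcess, id]
  ring

lemma continuous_stdGaussianSqExcess : Continuous stdGaussianSqExcess :=
  continuous_iff_continuousAt.2 fun α ↦ (hasDerivAt_stdGaussianSqExcess α).continuousAt

lemma strictAnti_stdGaussianSqExcess : StrictAnti stdGaussianSqExcess :=
  strictAnti_of_hasDerivAt_neg hasDerivAt_stdGaussianSqExcess fun α ↦ by
    linarith [stdGaussianExcess_pos α]

lemma neg_mul_stdGaussianPdf_le_stdGaussianSqExcess (α : ℝ) :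
    -(α * stdGaussianPdf α) ≤ stdGaussianSqExcess α := by
  have hcdf : 0 ≤ (1 + α ^ 2) * stdGaussianCdf (-α) :=
    mul_nonneg (by positivity) (stdGaussianCdf_nonneg _)
  rw [stdGaussianSqExcess]
  linarith

lemma stdGaussianSqExcess_le_stdGaussianCdf_neg {α : ℝ} (hα : 0 ≤ α) :
    stdGaussianSqExcess α ≤ stdGaussianCdf (-α) := by
  rw [stdGaussianSqExcess_eq_cdf_sub]
  exact sub_le_self _ (mul_nonneg hα (stdGaussianExcess_pos α).le)

lemma tendsto_stdGaussianSqExcess_atTop : Tendsto stdGaussianSqExcess atTop (𝓝 0) :=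
  tendsto_of_tendsto_of_tendsto_of_le_of_le'
    (by simpa only [neg_zero] using tendsto_mul_stdGaussianPdf_atTop.neg)
    (tendsto_stdGaussianCdf_atBot.comp tendsto_neg_atTop_atBot)
    (.of_forall neg_mul_stdGaussianPdf_le_stdGaussianSqExcess)
    ((eventually_ge_atTop 0).mono fun _ ↦ stdGaussianSqExcess_le_stdGaussianCdf_neg)

theorem alpha_min_exists_unique_general :
    Continuous stdGaussianSqExcess ∧ StrictAnti stdGaussianSqExcess ∧
      stdGaussianSqExcess 0 = 1 / 2 ∧ Tendsto stdGaussianSqExcess atTop (𝓝 0) ∧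
      ∀ a c : ℝ, 0 < c → c ≤ stdGaussianSqExcess a → ∃! α, a ≤ α ∧ stdGaussianSqExcess α = c :=
  ⟨continuous_stdGaussianSqExcess, strictAnti_stdGaussianSqExcess, stdGaussianSqExcess_zero,
    tendsto_stdGaussianSqExcess_atTop, fun _ _ hpos hle ↦
      existsUnique_ge_eq_of_injOn_of_tendsto_atTop continuous_stdGaussianSqExcess.continuousOn
        strictAnti_stdGaussianSqExcess.injective.injOn tendsto_stdGaussianSqExcess_atTop
        ⟨hpos, hle⟩⟩

/-- The function `h(α) = (1 + α²)Φ(−α) − αφ(α)` is continuous and strictly decreasing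
on `[0, ∞)`, with `h(0) = 1/2` and `h(α) → 0` as `α → ∞`; consequently for every
`0 < c ≤ 1/2` there is a unique `α ≥ 0` with `h(α) = c`, and in particular for
`δ > 0`, `γ_s > 0` with `(δ/2)(γ_s² + 1)²/γ_s⁴ ≤ 1/2` the equation
`(1 + α²)Φ(−α) − αφ(α) = (δ/2)(γ_s² + 1)²/γ_s⁴` has a unique nonnegative solution. -/
theorem alpha_min_exists_unique :
    ContinuousOn
      (fun α : ℝ => (1 + α^2) * stdGaussianCdf (-α) - α * stdGaussianPdf α)
      (Set.Ici 0) ∧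
    StrictAntiOn
      (fun α : ℝ => (1 + α^2) * stdGaussianCdf (-α) - α * stdGaussianPdf α)
      (Set.Ici 0) ∧
    (1 + (0:ℝ)^2) * stdGaussianCdf (-(0:ℝ)) - 0 * stdGaussianPdf 0 = 1/2 ∧
    Filter.Tendsto
      (fun α : ℝ => (1 + α^2) * stdGaussianCdf (-α) - α * stdGaussianPdf α)
      Filter.atTop (nhds 0) ∧
    (∀ c : ℝ, 0 < c → c ≤ 1/2 →
      ∃! α : ℝ, 0 ≤ α ∧
        (1 + α^2) * stdGaussianCdf (-α) - α * stdGaussianPdf α = c) ∧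
    (∀ δ γs : ℝ, 0 < δ → 0 < γs → (δ/2) * (γs^2 + 1)^2 / γs^4 ≤ 1/2 →
      ∃! α : ℝ, 0 ≤ α ∧
        (1 + α^2) * stdGaussianCdf (-α) - α * stdGaussianPdf α
          = (δ/2) * (γs^2 + 1)^2 / γs^4) := by
  obtain ⟨hcont, hanti, hzero, hlim, hsol⟩ := alpha_min_exists_unique_general
  exact ⟨hcont.continuousOn, hanti.strictAntiOn _, hzero, hlim,
    fun c hpos hle ↦ hsol 0 c hpos (hle.trans_eq hzero.symm),
    fun δ γs hδ hγs hle ↦ hsol 0 _ (by positivity) (hle.trans_eq hzero.symm)⟩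
end

section
/- Let δ > 0, γ > 0 and m ≥ 0, and define M*(δ, m, γ²) = (−G + √(G² + 4δγ²m)) / 2 with G = δγ² + δ − γ²m. Then M*(δ, m, γ²) ≤ m·γ²; that is, the minimax risk bound of GENP-LASSO never exceeds the minimax risk M^±(δρ)·γ_s² of scalar denoising of the side-information prior alone. -/
/-! `M*` is the larger root of `p(x) = x² + G x - δγ²m`. The point `x = mγ²` lies to the right of
the vertex of `p`, since `2x + G = δγ² + δ + γ²m ≥ 0`, and there `p(mγ²) = δγ⁴m ≥ 0`. -/

-- When the discriminant is negative, `√` is `0`, the left side is the vertex, and `0 < p x` always.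
theorem quadratic_larger_root_le_iff {a b c x : ℝ} (ha : 0 < a) :
    (-b + √(discrim a b c)) / (2 * a) ≤ x ↔
      0 ≤ 2 * a * x + b ∧ 0 ≤ a * (x * x) + b * x + c := by
  have complete_square :
      (2 * a * x + b) ^ 2 - discrim a b c = 4 * a * (a * (x * x) + b * x + c) := by
    rw [discrim]
    ring
  calc (-b + √(discrim a b c)) / (2 * a) ≤ x
      ↔ √(discrim a b c) ≤ 2 * a * x + b := by
        rw [div_le_iff₀' (by positivity), neg_add_le_iff_le_add, add_comm b]
    _ ↔ 0 ≤ 2 * a * x + b ∧ discrim a b c ≤ (2 * a * x + b) ^ 2 := Real.sqrt_le_iff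
    _ ↔ 0 ≤ 2 * a * x + b ∧ 0 ≤ a * (x * x) + b * x + c := by
        rw [← sub_nonneg (b := discrim a b c), complete_square,
          mul_nonneg_iff_of_pos_left (by positivity)]

/-- The GENP-LASSO minimax risk bound never exceeds the scalar-denoising minimax
risk of the side-information prior alone: `M*(δ, m, γ²) ≤ m·γ²`. -/
theorem genp_lasso_minimax_le_denoising_bound
    (δ γ m : ℝ) (hδ : 0 < δ) (hγ : 0 < γ) (hm : 0 ≤ m) :
    (-(δ*γ^2 + δ - γ^2*m)
        + Real.sqrt ((δ*γ^2 + δ - γ^2*m)^2 + 4*δ*γ^2*m)) / 2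
      ≤ m * γ^2 := by
  set G := δ * γ ^ 2 + δ - γ ^ 2 * m with hG
  have right_of_vertex : 0 ≤ 2 * 1 * (m * γ ^ 2) + G := by
    calc 0 ≤ δ * γ ^ 2 + δ + γ ^ 2 * m := by positivity
      _ = 2 * 1 * (m * γ ^ 2) + G := by rw [hG]; ring
  have value_nonneg :
      0 ≤ 1 * (m * γ ^ 2 * (m * γ ^ 2)) + G * (m * γ ^ 2) + -(δ * γ ^ 2 * m) := by
    calc 0 ≤ δ * γ ^ 4 * m := by positivity
      _ = 1 * (m * γ ^ 2 * (m * γ ^ 2)) + G * (m * γ ^ 2) + -(δ * γ ^ 2 * m) := by rw [hG]; ring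
  have discrim_eq : discrim 1 G (-(δ * γ ^ 2 * m)) = G ^ 2 + 4 * δ * γ ^ 2 * m := by
    rw [discrim]
    ring
  simpa only [discrim_eq, mul_one] using
    (quadratic_larger_root_le_iff one_pos).mpr ⟨right_of_vertex, value_nonneg⟩
end
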